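/- Let f(x,y) = (1/5)·x·y − cos(y) on X × Y = [−1,1] × [−2π,2π], and define g(x) = max_{y∈[−2π,2π]} f(x,y). Then: (i) g(0) = 1 and the set of maximizers of y ↦ f(0,y) over [−2π,2π] is exactly {−π, π}; (ii) g(x) ≥ 1 + (π/5)|x| for every x ∈ [−1,1]; hence (iii) x = 0 is the unique global minimizer of g over [−1,1], so the min-max problem min_{x∈[−1,1]} max_{y∈[−2π,2π]} f(x,y) has exactly the two global solutions (0, −π) and (0, π). -/

import Mathlib

/-!
Testing the maximum at `y = π` and at `y = -π`, where `-cos y` is largest, bounds the value function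
`g` below by a cone with vertex at `x = 0`. As `π > 0`, the cone is strictly increasing in `|x|`, so
`0` is the only minimizer, and over it the problem reduces to maximizing `-cos` alone.
-/

open Real

section MinMax

variable {α β γ : Type*} [Preorder γ]

/-- The global solutions `(x, y)` of `min_{x ∈ X} max_{y ∈ Y} f x y`. The value function
`g x = max_{y ∈ Y} f x y` is a parameter, since the maximum need not be attained off `X`. -/
def globalMinMaxSolutions (f : α → β → γ) (g : α → γ) (X : Set α) (Y : Set β) : Set (α × β) :=
  {p | p.1 ∈ X ∧ p.2 ∈ Y ∧ (∀ x ∈ X, g p.1 ≤ g x) ∧ f p.1 p.2 = g p.1}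

theorem globalMinMaxSolutions_eq_singleton_prod {g : α → γ} {X : Set α} {x₀ : α}
    (hx₀ : x₀ ∈ X) (hlt : ∀ x ∈ X, x ≠ x₀ → g x₀ < g x) (f : α → β → γ) (Y : Set β) :
    globalMinMaxSolutions f g X Y = {x₀} ×ˢ {y ∈ Y | f x₀ y = g x₀} := by
  ext ⟨x, y⟩
  constructor
  · rintro ⟨hx, hy, hmin, hmax⟩
    obtain rfl : x = x₀ := by_contra fun hne => (hlt x hx hne).not_ge (hmin x₀ hx₀)
    exact ⟨rfl, hy, hmax⟩
  · rintro ⟨rfl, hy, hmax⟩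
    have hmin : ∀ z ∈ X, g x ≤ g z := fun z hz => by
      rcases eq_or_ne z x with rfl | hne
      exacts [le_rfl, (hlt z hz hne).le]
    exact ⟨hx₀, hy, hmin, hmax⟩

end MinMax

theorem abs_mul_sub_le_of_mem_upperBounds {R : Type*} [Ring R] [LinearOrder R]
    [IsOrderedAddMonoid R] {φ : R → R} {Y : Set R} {s p m : R} (hφ : φ (-p) = φ p)
    (hp : p ∈ Y) (hnp : -p ∈ Y) (hm : m ∈ upperBounds ((fun y => s * y - φ y) '' Y)) :
    |s * p| - φ p ≤ m := by
  have at_pos : s * p - φ p ≤ m := hm (Set.mem_image_of_mem _ hp)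
  have at_neg : s * -p - φ (-p) ≤ m := hm (Set.mem_image_of_mem _ hnp)
  rw [hφ, mul_neg] at at_neg
  rw [sub_le_iff_le_add] at at_pos at_neg ⊢
  exact abs_le'.mpr ⟨at_pos, at_neg⟩

theorem isGreatest_neg_cos_image {Y : Set ℝ} (hY : π ∈ Y) :
    IsGreatest ((fun y => -cos y) '' Y) 1 := by
  refine ⟨⟨π, hY, by simp⟩, ?_⟩
  rintro _ ⟨y, -, rfl⟩
  exact neg_le.mp (neg_one_le_cos y)

theorem cos_eq_neg_one_iff_of_lt_of_lt {y : ℝ} (hy₁ : -(3 * π) < y) (hy₂ : y < 3 * π) :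
    cos y = -1 ↔ y = -π ∨ y = π := by
  refine ⟨fun h => ?_, by rintro (rfl | rfl) <;> simp⟩
  obtain ⟨k, rfl⟩ := Real.cos_eq_neg_one_iff.mp h
  have hk_lower : (-2 : ℝ) < k := by nlinarith [pi_pos]
  have hk_upper : (k : ℝ) < 1 := by nlinarith [pi_pos]
  norm_cast at hk_lower hk_upper
  obtain rfl | rfl : k = -1 ∨ k = 0 := by lia
  · left; push_cast; ring
  · right; simp

theorem sep_cos_eq_neg_one {Y : Set ℝ} (hπ : {-π, π} ⊆ Y)
    (hY : Y ⊆ Set.Ioo (-(3 * π)) (3 * π)) : {y ∈ Y | cos y = -1} = {-π, π} := by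
  ext y
  constructor
  · rintro ⟨hy, hcos⟩
    exact (cos_eq_neg_one_iff_of_lt_of_lt (hY hy).1 (hY hy).2).mp hcos
  · intro hy
    exact ⟨hπ hy, (cos_eq_neg_one_iff_of_lt_of_lt (hY (hπ hy)).1 (hY (hπ hy)).2).mpr hy⟩

theorem jin_example_general {c : ℝ} (hc : c ≠ 0) {X Y : Set ℝ} (hX : 0 ∈ X) (hπ : {-π, π} ⊆ Y)
    (hY : Y ⊆ Set.Ioo (-(3 * π)) (3 * π)) {g : ℝ → ℝ}
    (hg : ∀ x ∈ X, IsGreatest ((fun y => c * x * y - cos y) '' Y) (g x)) :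
    g 0 = 1 ∧
    {y ∈ Y | c * 0 * y - cos y = g 0} = {-π, π} ∧
    (∀ x ∈ X, 1 + |c| * π * |x| ≤ g x) ∧
    (∀ x ∈ X, x ≠ 0 → g 0 < g x) ∧
    globalMinMaxSolutions (fun x y => c * x * y - cos y) g X Y = {(0, -π), (0, π)} := by
  have hpos : π ∈ Y := hπ (by simp)
  have hneg : -π ∈ Y := hπ (by simp)
  have value_zero : g 0 = 1 :=
    (by simpa using hg 0 hX : IsGreatest ((fun y => -cos y) '' Y) (g 0)).unique
      (isGreatest_neg_cos_image hpos)
  have maximizers : {y ∈ Y | c * 0 * y - cos y = g 0} = {-π, π} := by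
    simpa [value_zero, neg_eq_iff_eq_neg] using sep_cos_eq_neg_one hπ hY
  have lower : ∀ x ∈ X, 1 + |c| * π * |x| ≤ g x := fun x hx => by
    have h := abs_mul_sub_le_of_mem_upperBounds (cos_neg π) hpos hneg (hg x hx).2
    rw [abs_mul, abs_mul, abs_of_pos pi_pos, cos_pi] at h
    linarith
  have strict : ∀ x ∈ X, x ≠ 0 → g 0 < g x := fun x hx hne => by
    have : 0 < |c| * π * |x| := by positivity
    linarith [lower x hx]
  refine ⟨value_zero, maximizers, lower, strict, ?_⟩
  rw [globalMinMaxSolutions_eq_singleton_prod hX strict, maximizers, Set.singleton_prod,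
    Set.image_pair]

/-- Example (Jin et al.): for `f(x,y) = (1/5) x y - cos y` on `[-1,1] × [-2π, 2π]` and
`g(x) = max_{y ∈ [-2π,2π]} f(x,y)`: (i) `g 0 = 1` and the maximizers of `f(0, ·)` are
exactly `{-π, π}`; (ii) `g x ≥ 1 + (π/5) |x|`; hence (iii) `x = 0` is the unique global
minimizer of `g` on `[-1,1]` and the min-max problem has exactly the two global solutions
`(0, -π)` and `(0, π)`. -/
theorem jin_example (g : ℝ → ℝ)
    (hg : ∀ x ∈ Set.Icc (-1 : ℝ) 1,
      IsGreatest ((fun y => (1 / 5) * x * y - Real.cos y) ''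
        Set.Icc (-(2 * π)) (2 * π)) (g x)) :
    g 0 = 1 ∧
    {y ∈ Set.Icc (-(2 * π)) (2 * π) | (1 / 5) * 0 * y - Real.cos y = g 0} =
      ({-π, π} : Set ℝ) ∧
    (∀ x ∈ Set.Icc (-1 : ℝ) 1, 1 + (π / 5) * |x| ≤ g x) ∧
    (∀ x ∈ Set.Icc (-1 : ℝ) 1, x ≠ 0 → g 0 < g x) ∧
    {p : ℝ × ℝ | p.1 ∈ Set.Icc (-1 : ℝ) 1 ∧ p.2 ∈ Set.Icc (-(2 * π)) (2 * π) ∧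
        (∀ x ∈ Set.Icc (-1 : ℝ) 1, g p.1 ≤ g x) ∧
        (1 / 5) * p.1 * p.2 - Real.cos p.2 = g p.1} =
      ({(0, -π), (0, π)} : Set (ℝ × ℝ)) := by
  have hX : (0 : ℝ) ∈ Set.Icc (-1 : ℝ) 1 := by simp
  have hπ : {-π, π} ⊆ Set.Icc (-(2 * π)) (2 * π) := by
    rintro y (rfl | rfl) <;> constructor <;> linarith [pi_pos]
  have hY : Set.Icc (-(2 * π)) (2 * π) ⊆ Set.Ioo (-(3 * π)) (3 * π) :=
    Set.Icc_subset_Ioo (by linarith [pi_pos]) (by linarith [pi_pos])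
  have slope : |(1 / 5 : ℝ)| * π = π / 5 := by rw [abs_of_pos (by norm_num)]; ring
  exact slope ▸ jin_example_general (by norm_num) hX hπ hY hg
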